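/- Let n ≥ 2. The set of nontrivial solutions of x·a_1 = f in K_n admits the following explicit description: { x ∈ K_n : x·a_1 = f and x ≠ a_n a_{n-1} ⋯ a_2 } = { z · a_1 · (a_{m(z)} a_{m(z)-1} ⋯ a_2) : z in the submonoid of K_n generated by {a_2, …, a_n} }, where m(z) = min{ i ∈ {0, 1, …, n} : z·(a_i a_{i-1} ⋯ a_1) = f } and an empty descending product denotes the identity e. -/

import Mathlib

namespace Kiselman

/-- The defining relations of Kiselman's semigroup on the free monoid over `Fin n`,
where the index `i : Fin n` represents the generator `a_{i+1}` (so letters are 0-based). -/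
def Rel (n : ℕ) : FreeMonoid (Fin n) → FreeMonoid (Fin n) → Prop := fun u v =>
  (∃ i : Fin n, u = .of i * .of i ∧ v = .of i) ∨
  (∃ i j : Fin n, j < i ∧
    ((u = .of i * .of j * .of i ∧ v = .of i * .of j) ∨
     (u = .of j * .of i * .of j ∧ v = .of i * .of j)))

/-- Kiselman's semigroup (monoid) `K n`, presented by the relations `Rel n`. -/
def K (n : ℕ) : Type := (conGen (Rel n)).Quotient

instance (n : ℕ) : Monoid (K n) := inferInstanceAs (Monoid (conGen (Rel n)).Quotient)

/-- The canonical epimorphism `φ` from the free monoid onto `K n`. -/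
def phi (n : ℕ) : FreeMonoid (Fin n) →* K n := Con.mk' _

/-- `φ` applied to a word given as a list of (0-based) letters. -/
def phiL (n : ℕ) (w : List (Fin n)) : K n := phi n (FreeMonoid.ofList w)

/-- The generator `a_{i+1}` of `K n` (`i` is the 0-based index). -/
def gen {n : ℕ} (i : Fin n) : K n := phi n (FreeMonoid.of i)

/-- The word `a_hi a_{hi-1} ⋯ a_lo` (letters named 1-based), as a list of 0-based indices:
`[hi-1, hi-2, …, lo-1]` (capped at `n`). -/
def descList (n lo hi : ℕ) : List (Fin n) :=
  ((List.finRange n).filter (fun k => decide (lo ≤ k.val + 1 ∧ k.val + 1 ≤ hi))).reverse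

/-- The zero element `f = a_n a_{n-1} ⋯ a_2 a_1` of `K n`. -/
def fEl (n : ℕ) : K n := phiL n (descList n 1 n)

/-- A word `w` is canonical if for every factorization `w = p ++ [i] ++ u ++ [i] ++ q`
there are letters `j > i` and `k < i` occurring in `u`. -/
def Canonical {n : ℕ} (w : List (Fin n)) : Prop :=
  ∀ (p u q : List (Fin n)) (i : Fin n),
    w = p ++ [i] ++ u ++ [i] ++ q →
    (∃ j ∈ u, i < j) ∧ (∃ k ∈ u, k < i)

/-- The submonoid of `K n` generated by `{a_2, a_3, …, a_n}`. -/
def upper (n : ℕ) : Submonoid (K n) := Submonoid.closure (gen '' {i : Fin n | i.val ≠ 0})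

/-- The submonoid of `K n` generated by `{a_1, a_2, …, a_{n-1}}`. -/
def lower (n : ℕ) : Submonoid (K n) := Submonoid.closure (gen '' {i : Fin n | i.val + 1 ≠ n})

/-- `m(x) = min { i ∈ {0,…,n} : x ⬝ (a_i a_{i-1} ⋯ a_1) = f }`. -/
noncomputable def mIdx {n : ℕ} (x : K n) : ℕ :=
  sInf {i : ℕ | x * phiL n (descList n 1 i) = fEl n}

section Action

variable {n : ℕ}

@[simp] lemma phiL_nil : phiL n [] = 1 := rfl

@[simp] lemma phiL_cons (i : Fin n) (w : List (Fin n)) : phiL n (i :: w) = gen i * phiL n w := by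
  simp [phiL, gen, FreeMonoid.ofList_cons]

@[simp] lemma phiL_append (u v : List (Fin n)) : phiL n (u ++ v) = phiL n u * phiL n v := by
  simp [phiL, FreeMonoid.ofList_append]

lemma phiL_surjective (x : K n) : ∃ w, phiL n w = x := by
  obtain ⟨w, rfl⟩ := Con.mk'_surjective (c := conGen (Rel n)) x
  exact ⟨FreeMonoid.toList w, rfl⟩

lemma phi_eq_of_rel {u v : FreeMonoid (Fin n)} (h : Rel n u v) : phi n u = phi n v :=
  (Con.eq _).2 (ConGen.Rel.of _ _ h)

lemma gen_mul_self (i : Fin n) : gen i * gen i = gen i := by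
  simpa only [gen, map_mul] using phi_eq_of_rel (n := n) (Or.inl ⟨i, rfl, rfl⟩)

lemma gen_high_low_high {i j : Fin n} (h : j < i) : gen i * gen j * gen i = gen i * gen j := by
  simpa only [gen, map_mul] using
    phi_eq_of_rel (n := n) (Or.inr ⟨i, j, h, Or.inl ⟨rfl, rfl⟩⟩)

lemma gen_low_high_low {i j : Fin n} (h : j < i) : gen j * gen i * gen j = gen i * gen j := by
  simpa only [gen, map_mul] using
    phi_eq_of_rel (n := n) (Or.inr ⟨i, j, h, Or.inr ⟨rfl, rfl⟩⟩)

/-- A letter can be deleted when it recurs with only larger letters in between. -/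
lemma gen_mul_phiL_mul_gen (k : Fin n) (w : List (Fin n)) (hw : ∀ j ∈ w, k < j) :
    gen k * phiL n w * gen k = phiL n w * gen k := by
  induction w using List.reverseRecOn with
  | nil => simp [gen_mul_self]
  | append_singleton v j ih =>
    have hj : k < j := hw j (by simp)
    have ih := ih fun i hi => hw i (by simp [hi])
    simp only [phiL_append, phiL_cons, phiL_nil, mul_one]
    calc gen k * (phiL n v * gen j) * gen k
        = gen k * phiL n v * (gen j * gen k) := by simp only [mul_assoc]
      _ = gen k * phiL n v * (gen k * gen j * gen k) := by rw [gen_low_high_low hj]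
      _ = gen k * phiL n v * gen k * (gen j * gen k) := by simp only [mul_assoc]
      _ = phiL n v * (gen k * gen j * gen k) := by rw [ih]; simp only [mul_assoc]
      _ = phiL n v * gen j * gen k := by rw [gen_low_high_low hj, mul_assoc]

lemma end_mul_apply {α : Type*} (g h : Function.End α) (t : α) : (g * h) t = g (h t) := rfl

/-- The effect of the letter `a_{i+1}` on the number of letters of `a_t ⋯ a_1` still to be
matched as a subsequence. -/
def step (i : Fin n) : Function.End ℕ := fun t => if t = i.val + 1 then i.val else t

/-- The right action of `K n` on `ℕ` by greedy matching of the subsequence `a_t ⋯ a_1`. -/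
def act (n : ℕ) : K n →* (Function.End ℕ)ᵐᵒᵖ :=
  Con.lift _ (FreeMonoid.lift fun i => MulOpposite.op (step i)) <| Con.conGen_le.2 <| by
    intro u v h
    rw [Con.ker_apply]
    rcases h with ⟨i, rfl, rfl⟩ | ⟨i, j, hij, ⟨rfl, rfl⟩ | ⟨rfl, rfl⟩⟩ <;>
    · simp only [map_mul, FreeMonoid.lift_eval_of, ← MulOpposite.op_mul]
      congr 1
      funext t
      simp only [end_mul_apply, step]
      grind

/-- The state reached from `t` after reading `x`. -/
def state (x : K n) (t : ℕ) : ℕ := (act n x).unop t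

@[simp] lemma state_one (t : ℕ) : state (1 : K n) t = t := by
  rw [state, map_one]
  rfl

@[simp] lemma state_mul (x y : K n) (t : ℕ) : state (x * y) t = state y (state x t) := by
  rw [state, map_mul]
  rfl

@[simp] lemma state_gen (i : Fin n) (t : ℕ) :
    state (gen i) t = if t = i.val + 1 then i.val else t := rfl

lemma state_le (x : K n) (t : ℕ) : state x t ≤ t := by
  obtain ⟨w, rfl⟩ := phiL_surjective x
  induction w generalizing t with
  | nil => simp
  | cons i w ih =>
    simp only [phiL_cons, state_mul, state_gen]
    refine (ih _).trans ?_
    split_ifs <;> omega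

/-- Reading letters above `l` cannot bring a state below `l`. -/
lemma le_state {l t : ℕ} (w : List (Fin n)) (hw : ∀ i ∈ w, l ≤ i.val) (ht : l ≤ t) :
    l ≤ state (phiL n w) t := by
  induction w generalizing t with
  | nil => simpa
  | cons i w ih =>
    simp only [phiL_cons, state_mul, state_gen]
    refine ih (fun j hj => hw j (by simp [hj])) ?_
    have := hw i (by simp)
    split_ifs <;> omega

lemma mem_descList {lo hi : ℕ} {i : Fin n} :
    i ∈ descList n lo hi ↔ lo ≤ i.val + 1 ∧ i.val + 1 ≤ hi := by
  simp [descList]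

lemma descList_pairwise (lo hi : ℕ) : (descList n lo hi).Pairwise (· > ·) := by
  rw [descList, List.pairwise_reverse]
  exact (List.pairwise_lt_finRange n).filter _

lemma descList_self (l : ℕ) : descList n (l + 1) l = [] := by
  refine List.eq_nil_iff_forall_not_mem.2 fun i hi => ?_
  have := mem_descList.1 hi
  omega

lemma descList_succ {lo k : ℕ} (hk : k < n) (hlo : lo ≤ k + 1) :
    descList n lo (k + 1) = ⟨k, hk⟩ :: descList n lo k := by
  have hp : (⟨k, hk⟩ :: descList n lo k : List (Fin n)).Pairwise (· > ·) := by
    refine List.pairwise_cons.2 ⟨fun i hi => ?_, descList_pairwise _ _⟩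
    have := mem_descList.1 hi
    exact Fin.lt_def.2 (by simp; omega)
  refine List.Perm.eq_of_pairwise' (descList_pairwise _ _) hp ?_
  refine (List.perm_ext_iff_of_nodup (descList_pairwise _ _).nodup hp.nodup).2 fun i => ?_
  simp only [List.mem_cons, mem_descList, Fin.ext_iff]
  omega

lemma state_descList {l t hi : ℕ} (hl : l ≤ t) (ht : t ≤ hi) (hn : hi ≤ n) :
    state (phiL n (descList n (l + 1) hi)) t = l := by
  have hlhi := hl.trans ht
  induction hi, hlhi using Nat.le_induction generalizing t with
  | base => rw [descList_self]; simp; omega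
  | succ k hk ih =>
    rw [descList_succ (by omega) (by omega)]
    simp only [phiL_cons, state_mul, state_gen]
    split_ifs with h
    · exact ih hk le_rfl (by omega)
    · exact ih hl (by omega) (by omega)

/-- A state matching none of the letters read is fixed. -/
lemma state_eq_of_lt {t : ℕ} (w : List (Fin n)) (hw : ∀ i ∈ w, i.val + 1 ≠ t) :
    state (phiL n w) t = t := by
  induction w with
  | nil => simp
  | cons i w ih =>
    simp only [phiL_cons, state_mul, state_gen]
    rw [if_neg (hw i (by simp)).symm]
    exact ih fun j hj => hw j (by simp [hj])

/-- Once `a_n ⋯ a_{j+1}` has been matched, the letter `a_{j+1}` is absorbed on the right. -/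
lemma mul_gen_of_state_le (y : K n) (j : Fin n) (hy : state y n ≤ j.val) : y * gen j = y := by
  obtain ⟨w, rfl⟩ := phiL_surjective y
  induction w using List.reverseRecOn generalizing j with
  | nil => simp at hy; omega
  | append_singleton v k ih =>
    simp only [phiL_append, phiL_cons, phiL_nil, mul_one, state_mul, state_gen] at hy ⊢
    rcases eq_or_ne k j with rfl | hkj
    · rw [mul_assoc, gen_mul_self]
    have hne : k.val ≠ j.val := fun h => hkj (Fin.ext h)
    have hv : state (phiL n v) n ≤ j.val := by
      split_ifs at hy with h <;> omega
    have hvj := ih j hv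
    rcases lt_or_gt_of_ne hkj with h | h
    · calc phiL n v * gen k * gen j = phiL n v * gen j * gen k * gen j := by rw [hvj]
        _ = phiL n v * (gen j * gen k * gen j) := by simp only [mul_assoc]
        _ = phiL n v * gen k := by rw [gen_high_low_high h, ← mul_assoc, hvj]
    · rw [ih k (hv.trans (Fin.lt_def.1 h).le), hvj]

lemma gen_mul_descList {l m : ℕ} (k : Fin n) (hl : l ≤ k.val) (hk : k.val < m) :
    gen k * phiL n (descList n (l + 1) m) = phiL n (descList n (l + 1) m) := by
  obtain ⟨u, v, huv⟩ := List.append_of_mem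
    (mem_descList.2 ⟨by omega, hk⟩ : k ∈ descList n (l + 1) m)
  have hp := descList_pairwise (n := n) (l + 1) m
  rw [huv, List.pairwise_append] at hp
  have := gen_mul_phiL_mul_gen k u fun j hj => hp.2.2 j hj k (by simp)
  rw [huv, phiL_append, phiL_cons, ← mul_assoc, ← mul_assoc, this, mul_assoc]

/-- If `y` has matched `a_n ⋯ a_{m+1}` and `w` matches `a_m ⋯ a_{l+1}` using letters above `a_l`
only, then `w` may be replaced by `a_m ⋯ a_{l+1}` after `y`. -/
lemma mul_phiL_eq_mul_descList {l m : ℕ} (hm : m ≤ n) (y : K n) (hy : state y n ≤ m)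
    (w : List (Fin n)) (hw : ∀ i ∈ w, l ≤ i.val) (hlm : state (phiL n w) m = l) :
    y * phiL n w = y * phiL n (descList n (l + 1) m) := by
  induction w generalizing m y with
  | nil =>
    simp only [phiL_nil, state_one] at hlm
    rw [hlm, descList_self]
  | cons k w ih =>
    have hk := hw k (by simp)
    have hw' : ∀ i ∈ w, l ≤ i.val := fun i hi => hw i (by simp [hi])
    simp only [phiL_cons, state_mul, state_gen] at hlm ⊢
    rw [← mul_assoc]
    split_ifs at hlm with h
    · subst h
      rw [descList_succ k.isLt (by omega), phiL_cons, ← mul_assoc]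
      refine ih k.isLt.le _ ?_ hw' hlm
      simp only [state_mul, state_gen]
      split_ifs <;> omega
    · rcases lt_or_ge k.val m with hkm | hkm
      · rw [ih hm (y * gen k) ?_ hw' hlm, mul_assoc, gen_mul_descList k hk hkm]
        rw [state_mul]
        exact (state_le _ _).trans hy
      · rw [mul_gen_of_state_le y k (hy.trans hkm)]
        exact ih hm y hy hw' hlm

lemma eq_fEl_iff (x : K n) : x = fEl n ↔ state x n = 0 := by
  constructor
  · rintro rfl
    exact state_descList (Nat.zero_le _) le_rfl le_rfl
  · intro h
    obtain ⟨w, rfl⟩ := phiL_surjective x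
    simpa [fEl] using
      mul_phiL_eq_mul_descList (l := 0) le_rfl (1 : K n) (by simp) w (by simp) h

lemma mIdx_eq_state (z : K n) : mIdx z = state z n := by
  have hle := state_le z n
  have hmem : state z n ∈ {i : ℕ | z * phiL n (descList n 1 i) = fEl n} := by
    rw [Set.mem_ofPred_eq, eq_fEl_iff, state_mul]
    exact state_descList (Nat.zero_le _) le_rfl hle
  refine le_antisymm (Nat.sInf_le hmem) ?_
  by_contra! hlt
  have h := Nat.sInf_mem ⟨_, hmem⟩
  rw [Set.mem_ofPred_eq, eq_fEl_iff, state_mul, state_eq_of_lt] at h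
  · omega
  · intro i hi
    have := (mem_descList.1 hi).2
    change mIdx z < _ at hlt
    change _ ≤ mIdx z at this
    omega

lemma mem_upper_iff (z : K n) : z ∈ upper n ↔ ∃ w, (∀ i ∈ w, 1 ≤ i.val) ∧ phiL n w = z := by
  constructor
  · intro hz
    induction hz using Submonoid.closure_induction with
    | mem x hx =>
      obtain ⟨i, hi, rfl⟩ := hx
      exact ⟨[i], by simpa [Nat.one_le_iff_ne_zero] using hi, by simp⟩
    | one => exact ⟨[], by simp, rfl⟩
    | mul x y _ _ hx hy =>
      obtain ⟨u, hu, rfl⟩ := hx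
      obtain ⟨v, hv, rfl⟩ := hy
      refine ⟨u ++ v, fun i hi => ?_, by simp⟩
      exact (List.mem_append.1 hi).elim (hu i) (hv i)
  · rintro ⟨w, hw, rfl⟩
    induction w with
    | nil => exact one_mem _
    | cons i w ih =>
      rw [phiL_cons]
      refine mul_mem (Submonoid.subset_closure ⟨i, ?_, rfl⟩) (ih fun j hj => hw j (by simp [hj]))
      exact Nat.one_le_iff_ne_zero.1 (hw i (by simp))

/-- All occurrences of `a_1` but the last can be deleted from a word. -/
lemma eq_phiL_or_eq_phiL_mul_gen_mul_phiL (h0 : 0 < n) (w : List (Fin n)) :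
    (∀ i ∈ w, 1 ≤ i.val) ∨ ∃ u v : List (Fin n), (∀ i ∈ u, 1 ≤ i.val) ∧ (∀ i ∈ v, 1 ≤ i.val) ∧
      phiL n w = phiL n u * gen ⟨0, h0⟩ * phiL n v := by
  induction w with
  | nil => simp
  | cons k w ih =>
    rcases Nat.eq_zero_or_pos k.val with hk | hk
    · obtain rfl : k = ⟨0, h0⟩ := Fin.ext hk
      right
      rcases ih with hw | ⟨u, v, hu, hv, h⟩
      · exact ⟨[], w, by simp, hw, by simp⟩
      · refine ⟨u, v, hu, hv, ?_⟩
        rw [phiL_cons, h, ← mul_assoc, ← mul_assoc, gen_mul_phiL_mul_gen _ u hu]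
    · rcases ih with hw | ⟨u, v, hu, hv, h⟩
      · exact Or.inl (List.forall_mem_cons.2 ⟨hk, hw⟩)
      · exact Or.inr ⟨k :: u, v, List.forall_mem_cons.2 ⟨hk, hu⟩, hv, by simp [h, mul_assoc]⟩

/-- A word without `a_1` that solves the equation matches `a_n ⋯ a_2` exactly. -/
lemma state_eq_one_of_mul_gen (h0 : 0 < n) (w : List (Fin n)) (hw : ∀ i ∈ w, 1 ≤ i.val)
    (h : phiL n w * gen ⟨0, h0⟩ = fEl n) : state (phiL n w) n = 1 := by
  have := le_state w hw h0
  rw [eq_fEl_iff, state_mul, state_gen] at h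
  split_ifs at h with h1
  · exact h1
  · omega

end Action

/-- Explicit description of the nontrivial solutions of `x * a_1 = f`:
they are exactly the elements `z ⬝ a_1 ⬝ (a_{m(z)} a_{m(z)-1} ⋯ a_2)` with `z` in the
submonoid generated by `a_2, …, a_n`. -/
theorem nontrivial_solutions (n : ℕ) (hn : 2 ≤ n) :
    {x : K n | x * gen ⟨0, by omega⟩ = fEl n ∧ x ≠ phiL n (descList n 2 n)} =
    {x : K n | ∃ z ∈ upper n,
      x = z * gen ⟨0, by omega⟩ * phiL n (descList n 2 (mIdx z))} := by
  have h0 : 0 < n := by omega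
  ext x
  constructor
  · rintro ⟨hx, hne⟩
    obtain ⟨w, rfl⟩ := phiL_surjective x
    rcases eq_phiL_or_eq_phiL_mul_gen_mul_phiL h0 w with hw | ⟨u, v, hu, hv, h⟩
    · refine absurd ?_ hne
      simpa using mul_phiL_eq_mul_descList le_rfl (1 : K n) (by simp) w hw
        (state_eq_one_of_mul_gen h0 w hw hx)
    · refine ⟨phiL n u, (mem_upper_iff _).2 ⟨u, hu, rfl⟩, ?_⟩
      have huv : phiL n (u ++ v) * gen ⟨0, h0⟩ = fEl n := by
        rw [← hx, h, phiL_append, mul_assoc, mul_assoc (phiL n u * _), mul_assoc (phiL n u),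
          ← mul_assoc (gen _), gen_mul_phiL_mul_gen _ v hv]
      have hs := state_eq_one_of_mul_gen h0 (u ++ v)
        (fun i hi => (List.mem_append.1 hi).elim (hu i) (hv i)) huv
      rw [phiL_append, state_mul] at hs
      rw [mIdx_eq_state, h]
      refine mul_phiL_eq_mul_descList (state_le _ _) _ ?_ v hv hs
      rw [state_mul]
      exact state_le _ _
  · rintro ⟨z, hz, rfl⟩
    obtain ⟨u, hu, rfl⟩ := (mem_upper_iff z).1 hz
    rw [mIdx_eq_state]
    have hdesc (m : ℕ) : ∀ i ∈ descList n 2 m, 1 ≤ i.val := fun i hi => by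
      have := mem_descList.1 hi
      omega
    constructor
    · rw [mul_assoc, mul_assoc, ← mul_assoc (gen _) (phiL n _),
        gen_mul_phiL_mul_gen _ _ (hdesc _), eq_fEl_iff, state_mul, state_mul,
        state_descList (le_state u hu h0) le_rfl (state_le _ _)]
      simp
    · intro heq
      have h1 := congrArg (fun y => state y 1) heq
      have hfix : ∀ w : List (Fin n), (∀ i ∈ w, 1 ≤ i.val) → state (phiL n w) 1 = 1 :=
        fun w hw => le_antisymm (state_le _ _) (le_state w hw le_rfl)
      have hz0 := state_le (phiL n (descList n 2 (state (phiL n u) n))) 0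
      simp only [state_mul, hfix u hu, hfix _ (hdesc n), state_gen, zero_add, if_true] at h1
      omega

end Kiselman
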